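/- arXiv:2604.14940 — 2 statements merged into one kernel-verified Lean document; each statement's English description precedes it below -/
import Mathlib

section
/- Second order necessary optimality conditions on an L² box. Let (Ω, μ) be a finite measure space, a < b real numbers, and Q_ad := { q ∈ L²(μ) : a ≤ q ≤ b μ-a.e. }. Let j : L²(μ) → ℝ be twice continuously Fréchet differentiable, let q̄ ∈ Q_ad be a local minimizer of j on Q_ad with respect to the L²(μ)-norm, and let d̄ ∈ L²(μ) represent the first derivative: j′(q̄)w = ∫_Ω d̄ w dμ for all w ∈ L²(μ). Then for every h in the critical cone C_{q̄} one has j″(q̄)(h,h) ≥ 0. -/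
open MeasureTheory

open Filter Topology in
lemma aux1d (g φ : ℝ → ℝ) (c δ : ℝ) (hδ : 0 < δ) (hg : ∀ t, HasDerivAt g (φ t) t)
    (h0 : φ 0 = 0) (hφ : HasDerivAt φ c 0) (hm : ∀ t, 0 ≤ t → t ≤ δ → g 0 ≤ g t) : 0 ≤ c := by
  by_contra! hc
  have h1 := (hasDerivAt_iff_tendsto_slope.1 hφ).eventually (gt_mem_nhds hc)
  have h2 : ∀ᶠ t in 𝓝[>] (0:ℝ), slope φ 0 t < 0 :=
    h1.filter_mono (nhdsWithin_mono _ (fun t (ht : 0 < t) => ht.ne'))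
  obtain ⟨e, he, hsub⟩ := mem_nhdsGT_iff_exists_Ioo_subset.1 h2
  have he : 0 < e := he
  set r := min (e/2) δ with hr
  have hr0 : 0 < r := lt_min (by linarith) hδ
  have hre : r < e := lt_of_le_of_lt (min_le_left _ _) (by linarith)
  have hanti : StrictAntiOn g (Set.Icc 0 r) := by
    apply strictAntiOn_of_deriv_neg (convex_Icc _ _)
    · exact fun t _ => (hg t).continuousAt.continuousWithinAt
    · intro t ht
      rw [interior_Icc] at ht
      rw [(hg t).deriv]
      have h3 : slope φ 0 t < 0 := hsub ⟨ht.1, ht.2.trans hre⟩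
      rw [slope_def_field, h0, sub_zero, sub_zero] at h3
      by_contra! h4
      exact absurd h3 (not_lt.2 (div_nonneg h4 ht.1.le))
  have := hanti ⟨le_rfl, hr0.le⟩ ⟨hr0.le, le_rfl⟩ hr0
  linarith [hm r hr0.le (min_le_right _ _)]

lemma auxdir {E : Type*} [NormedAddCommGroup E] [NormedSpace ℝ E] (j : E → ℝ)
    (hj : ContDiff ℝ 2 j) (q v : E) (δ : ℝ) (hδ : 0 < δ) (h0 : fderiv ℝ j q v = 0)
    (hm : ∀ t : ℝ, 0 ≤ t → t ≤ δ → j q ≤ j (q + t • v)) :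
    0 ≤ fderiv ℝ (fderiv ℝ j) q v v := by
  have hl : ∀ t : ℝ, HasDerivAt (fun t : ℝ => q + t • v) v t := fun t => by
    simpa using ((hasDerivAt_id t).smul_const v).const_add q
  have hd : Differentiable ℝ j := hj.differentiable (by norm_num)
  have hd2 : Differentiable ℝ (fderiv ℝ j) :=
    (hj.fderiv_right (m := 1) (by norm_num)).differentiable (by norm_num)
  refine aux1d (fun t => j (q + t • v)) (fun t => fderiv ℝ j (q + t • v) v) _ δ hδ ?_ (by simpa) ?_
    (by simpa using hm)
  · intro t
    exact (hd (q + t • v)).hasFDerivAt.comp_hasDerivAt t (hl t)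
  · have h1 : HasFDerivAt (fderiv ℝ j) (fderiv ℝ (fderiv ℝ j) q) (q + (0:ℝ) • v) := by
      simpa using (hd2 q).hasFDerivAt
    have h2 := h1.comp_hasDerivAt (0:ℝ) (hl 0)
    have h3 := h2.clm_apply (hasDerivAt_const (0:ℝ) v)
    simpa using h3

open Filter Topology in
theorem auxconv {Ω : Type*} [MeasurableSpace Ω] (μ : Measure Ω) (h : Lp ℝ 2 μ)
    (S : ℕ → Set Ω) (hS : ∀ n, MeasurableSet (S n))
    (hev : ∀ᵐ x ∂μ, h x = 0 ∨ ∀ᶠ n in atTop, x ∈ S n) :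
    Tendsto (fun n => ((Lp.memLp h).indicator (hS n)).toLp _) atTop (𝓝 h) := by
  have h2 : ∀ n, ‖((Lp.memLp h).indicator (hS n)).toLp _ - h‖^2
      = ∫ x, ((S n).indicator h x - h x)^2 ∂μ := by
    intro n
    rw [← real_inner_self_eq_norm_sq, L2.inner_def]
    apply integral_congr_ae
    filter_upwards [((Lp.memLp h).indicator (hS n)).coeFn_toLp,
      Lp.coeFn_sub (((Lp.memLp h).indicator (hS n)).toLp _) h] with x h1 h2
    rw [real_inner_self_eq_norm_sq, Real.norm_eq_abs, sq_abs, h2, Pi.sub_apply, h1]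
  have h3 : Tendsto (fun n => ∫ x, ((S n).indicator h x - h x)^2 ∂μ) atTop (𝓝 (∫ x, 0 ∂μ)) := by
    apply tendsto_integral_of_dominated_convergence (fun x => (h x)^2)
    · intro n
      exact ((((Lp.memLp h).indicator (hS n)).1.sub (Lp.memLp h).1).pow 2)
    · exact (Lp.memLp h).integrable_sq
    · intro n
      refine ae_of_all _ fun x => ?_
      by_cases hx : x ∈ S n <;> simp [hx, sq_nonneg]
    · filter_upwards [hev] with x hx
      apply tendsto_const_nhds.congr'
      rcases hx with hx | hx
      · refine Eventually.of_forall fun n => ?_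
        by_cases hn : x ∈ S n <;> simp [hn, hx]
      · filter_upwards [hx] with n hn
        simp [hn]
  rw [tendsto_iff_norm_sub_tendsto_zero]
  have h4 := (h3.congr fun n => (h2 n).symm).sqrt
  simpa using h4

open Filter Topology in
/-- Second order necessary optimality conditions on an `L²` box: if `j` is `C²`,
`q̄ ∈ Q_ad` is a local minimizer of `j` on `Q_ad`, and `d̄ ∈ L²` represents `j'(q̄)`,
then `j''(q̄)(h,h) ≥ 0` for every `h` in the critical cone `C_{q̄}`. -/
theorem stmt_9 {Ω : Type*} [MeasurableSpace Ω] (μ : Measure Ω) [IsFiniteMeasure μ]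
    (a b : ℝ) (hab : a < b)
    (j : Lp ℝ 2 μ → ℝ) (hj : ContDiff ℝ 2 j)
    (qbar : Lp ℝ 2 μ) (hqbar_ad : ∀ᵐ x ∂μ, a ≤ qbar x ∧ qbar x ≤ b)
    (hmin : ∃ ε > 0, ∀ q : Lp ℝ 2 μ, (∀ᵐ x ∂μ, a ≤ q x ∧ q x ≤ b) →
      ‖q - qbar‖ ≤ ε → j qbar ≤ j q)
    (dbar : Lp ℝ 2 μ)
    (hrep : ∀ w : Lp ℝ 2 μ, fderiv ℝ j qbar w = ∫ x, dbar x * w x ∂μ)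
    (h : Lp ℝ 2 μ)
    (hC : ∀ᵐ x ∂μ, (dbar x ≠ 0 → h x = 0) ∧
      (qbar x = a → 0 ≤ h x) ∧ (qbar x = b → h x ≤ 0)) :
    0 ≤ fderiv ℝ (fderiv ℝ j) qbar h h := by
  obtain ⟨ε, hε, hmin⟩ := hmin
  let s : ℕ → ℝ := fun n => 1 / ((n:ℝ) + 1)
  have hs0 : ∀ n, 0 < s n := fun n => by positivity
  have hs : Tendsto s atTop (𝓝 0) := tendsto_one_div_add_atTop_nhds_zero_nat
  let S : ℕ → Set Ω := fun n => {x | a ≤ qbar x + s n * h x ∧ qbar x + s n * h x ≤ b}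
  have hS : ∀ n, MeasurableSet (S n) := by
    intro n
    have hm : Measurable fun x => qbar x + s n * h x :=
      (Lp.stronglyMeasurable qbar).measurable.add ((Lp.stronglyMeasurable h).measurable.const_mul _)
    exact (measurableSet_le measurable_const hm).inter (measurableSet_le hm measurable_const)
  have hev : ∀ᵐ x ∂μ, h x = 0 ∨ ∀ᶠ n in atTop, x ∈ S n := by
    filter_upwards [hqbar_ad, hC] with x hx hc
    right
    have ht : Tendsto (fun n => qbar x + s n * h x) atTop (𝓝 (qbar x)) := by
      simpa using (hs.mul_const (h x)).const_add (qbar x)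
    have e1 : ∀ᶠ n in atTop, a ≤ qbar x + s n * h x := by
      rcases hx.1.eq_or_lt with he | hl
      · refine Eventually.of_forall fun n => ?_
        have := mul_nonneg (hs0 n).le (hc.2.1 he.symm)
        linarith
      · exact (ht.eventually (lt_mem_nhds hl)).mono fun n hn => hn.le
    have e2 : ∀ᶠ n in atTop, qbar x + s n * h x ≤ b := by
      rcases hx.2.eq_or_lt with he | hl
      · refine Eventually.of_forall fun n => ?_
        have := mul_nonneg (hs0 n).le (neg_nonneg.2 (hc.2.2 he))
        linarith
      · exact (ht.eventually (gt_mem_nhds hl)).mono fun n hn => hn.le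
    exact e1.and e2
  have hconv := auxconv μ h S hS hev
  have hcont : Continuous fun v : Lp ℝ 2 μ => fderiv ℝ (fderiv ℝ j) qbar v v := by fun_prop
  refine ge_of_tendsto' ((hcont.tendsto h).comp hconv) fun n => ?_
  simp only [Function.comp]
  have hv := ((Lp.memLp h).indicator (hS n)).coeFn_toLp
  set v := ((Lp.memLp h).indicator (hS n)).toLp _ with hvdef
  have hpos : 0 < ‖v‖ + 1 := by positivity
  refine auxdir j hj qbar v (min (s n) (ε / (‖v‖ + 1))) (lt_min (hs0 n) (by positivity)) ?_ ?_
  · rw [hrep]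
    apply integral_eq_zero_of_ae
    filter_upwards [hv, hC] with x h1 h2
    rw [h1, Pi.zero_apply]
    by_cases hd : dbar x = 0
    · simp [hd]
    · simp [Set.indicator_apply, h2.1 hd]
  · intro t ht0 ht
    apply hmin
    · filter_upwards [hv, hqbar_ad, Lp.coeFn_add qbar (t • v), Lp.coeFn_smul t v] with x h1 h2 h3 h4
      rw [h3, Pi.add_apply, h4, Pi.smul_apply, h1, smul_eq_mul]
      by_cases hx : x ∈ S n
      · rw [Set.indicator_of_mem hx]
        have hts : t ≤ s n := ht.trans (min_le_left _ _)
        obtain ⟨ha, hb⟩ : a ≤ qbar x + s n * h x ∧ qbar x + s n * h x ≤ b := hx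
        have := hs0 n
        rcases le_total 0 (h x) with hh | hh
        · have := mul_le_mul_of_nonneg_right hts hh
          have := mul_nonneg ht0 hh
          constructor <;> linarith
        · have := mul_le_mul_of_nonpos_right hts hh
          have := mul_nonpos_of_nonneg_of_nonpos ht0 hh
          constructor <;> linarith
      · simpa [hx] using h2
    · rw [add_sub_cancel_left, norm_smul, Real.norm_of_nonneg ht0]
      have h5 : t ≤ ε / (‖v‖ + 1) := ht.trans (min_le_right _ _)
      rw [le_div_iff₀ hpos] at h5
      nlinarith
end

section
/- Second order sufficient optimality conditions (quadratic growth) on an L² box. Let (Ω, μ) be a finite measure space, a < b real numbers, and Q_ad := { q ∈ L²(μ) : a ≤ q ≤ b μ-a.e. }. Let j : L²(μ) → ℝ be twice continuously Fréchet differentiable and let q̄ ∈ Q_ad and d̄ ∈ L²(μ) satisfy: (i) j′(q̄)w = ∫_Ω d̄ w dμ for all w ∈ L²(μ); (ii) the variational inequality ∫_Ω d̄ (q − q̄) dμ ≥ 0 for all q ∈ Q_ad. Assume there exists α > 0 such that for every sequence (q_k) ⊂ Q_ad with q_k → q̄ in L²(μ) and every sequence (h_k) ⊂ L²(μ) with ‖h_k‖_{L²(μ)}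 = 1 converging weakly in L²(μ) to some h (i.e. ∫ h_k g dμ → ∫ h g dμ for every g ∈ L²(μ)), one has liminf_k j″(q_k)(h_k,h_k) ≥ j″(q̄)(h,h) + α(1 − ‖h‖²_{L²(μ)}). Assume finally that j″(q̄)(v,v) > 0 for every v ∈ C_{q̄} with v ≠ 0. Then there exist δ > 0 and σ > 0 such that j(q) ≥ j(q̄) + (δ/2)‖q − q̄‖²_{L²(μ)} for every q ∈ Q_ad with ‖q − q̄‖_{L²(μ)} ≤ σ. -/
open MeasureTheory Filter

theorem aux_weak_compact {E : Type*} [NormedAddCommGroup E] [InnerProductSpace ℝ E]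
    [CompleteSpace E] (u : ℕ → E) (hu : ∀ n, ‖u n‖ ≤ 1) :
    ∃ h : E, ‖h‖ ≤ 1 ∧ ∃ φ : ℕ → ℕ, StrictMono φ ∧
      ∀ g : E, Tendsto (fun k => inner ℝ (u (φ k)) g) atTop (nhds (inner ℝ h g)) := by
  let K : Submodule ℝ E := (Submodule.span ℝ (Set.range u)).topologicalClosure
  have hKc : IsClosed (K : Set E) := Submodule.isClosed_topologicalClosure _
  have : CompleteSpace K := hKc.completeSpace_coe
  have hsep : TopologicalSpace.IsSeparable (K : Set E) := by
    have h1 : TopologicalSpace.IsSeparable (Set.range u) :=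
      (Set.countable_range u).isSeparable
    have h2 := (h1.span (R := ℝ)).closure
    simpa [K] using h2
  have : TopologicalSpace.SeparableSpace K := hsep.separableSpace
  have huK : ∀ n, u n ∈ K := fun n =>
    Submodule.le_topologicalClosure _ (Submodule.subset_span ⟨n, rfl⟩)
  let v : ℕ → K := fun n => ⟨u n, huK n⟩
  let F : ℕ → WeakDual ℝ K := fun n =>
    StrongDual.toWeakDual (InnerProductSpace.toDual ℝ K (v n))
  have hF : ∀ n, F n ∈ WeakDual.toStrongDual ⁻¹' Metric.closedBall (0 : StrongDual ℝ K) 1 := by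
    intro n
    have : ‖InnerProductSpace.toDual ℝ K (v n)‖ ≤ 1 := by
      rw [LinearIsometryEquiv.norm_map]; exact hu n
    exact (mem_closedBall_zero_iff (E := StrongDual ℝ K)).2 this
  obtain ⟨f, hf, φ, hφ, hlim⟩ := WeakDual.isSeqCompact_closedBall ℝ K 0 1 hF
  let h : K := (InnerProductSpace.toDual ℝ K).symm (WeakDual.toStrongDual f)
  refine ⟨(h : E), ?_, φ, hφ, ?_⟩
  · have : ‖h‖ ≤ 1 := by
      simp only [h, LinearIsometryEquiv.norm_map]
      exact (mem_closedBall_zero_iff (E := StrongDual ℝ K)).1 hf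
    exact this
  · intro g
    have key : ∀ w : K, inner ℝ (w : E) g = inner ℝ w (K.orthogonalProjectionOnto g) := by
      intro w
      rw [Submodule.inner_orthogonalProjectionOnto_eq_of_mem_left]
    have hev := ((WeakDual.eval_continuous (K.orthogonalProjectionOnto g)).tendsto f).comp hlim
    have e1 : ∀ k, inner ℝ (u (φ k)) g = F (φ k) (K.orthogonalProjectionOnto g) := by
      intro k
      rw [show u (φ k) = ((v (φ k) : K) : E) from rfl, key]
      rfl
    have e2 : inner ℝ (h : E) g = f (K.orthogonalProjectionOnto g) := by
      rw [key]
      exact InnerProductSpace.toDual_symm_apply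
    simp only [e1, e2]
    exact hev

theorem aux_taylor {E : Type*} [NormedAddCommGroup E] [NormedSpace ℝ E]
    (j : E → ℝ) (hj : ContDiff ℝ 2 j) (x w : E) :
    ∃ t : ℝ, 0 < t ∧ t < 1 ∧
      j (x + w) = j x + fderiv ℝ j x w + 1 / 2 * fderiv ℝ (fderiv ℝ j) (x + t • w) w w := by
  have hd : Differentiable ℝ j := hj.differentiable (by norm_num)
  have hd2 : Differentiable ℝ (fderiv ℝ j) :=
    (hj.fderiv_right (m := 1) (by norm_num)).differentiable (by norm_num)
  have hl : ∀ t : ℝ, HasDerivAt (fun t : ℝ => x + t • w) w t := by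
    intro t
    simpa using ((hasDerivAt_id t).smul_const w).const_add x
  have h1 : ∀ t : ℝ, HasDerivAt (fun t : ℝ => j (x + t • w)) (fderiv ℝ j (x + t • w) w) t :=
    fun t => (hd _).hasFDerivAt.comp_hasDerivAt t (hl t)
  have h2 : ∀ t : ℝ, HasDerivAt (fun t : ℝ => fderiv ℝ j (x + t • w) w)
      (fderiv ℝ (fderiv ℝ j) (x + t • w) w w) t := by
    intro t
    have := (hd2 (x + t • w)).hasFDerivAt.comp_hasDerivAt t (hl t)
    simpa using this.clm_apply (hasDerivAt_const t w)
  have hF : ∀ t : ℝ, HasDerivAt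
      (fun t : ℝ => j (x + t • w) + fderiv ℝ j (x + t • w) w * (1 - t))
      (fderiv ℝ (fderiv ℝ j) (x + t • w) w w * (1 - t)) t := by
    intro t
    have := (h1 t).add ((h2 t).mul ((hasDerivAt_id t).const_sub 1))
    refine this.congr_deriv ?_
    simp
  have hG : ∀ t : ℝ, HasDerivAt (fun t : ℝ => t - t ^ 2 / 2) (1 - t) t := by
    intro t
    have := (hasDerivAt_id t).sub (((hasDerivAt_id t).pow 2).div_const 2)
    refine this.congr_deriv ?_
    simp
  obtain ⟨c, hc, he⟩ := exists_ratio_hasDerivAt_eq_ratio_slope _ _ (zero_lt_one (α := ℝ))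
    (fun t _ => (hF t).continuousAt.continuousWithinAt) (fun t _ => hF t)
    _ _ (fun t _ => (hG t).continuousAt.continuousWithinAt) (fun t _ => hG t)
  refine ⟨c, hc.1, hc.2, ?_⟩
  have hne : (1 - c) ≠ 0 := by linarith [hc.2]
  simp only [one_smul, zero_smul, add_zero] at he
  have : (1 - c) * (j (x + w) - (j x + fderiv ℝ j x w
      + 1 / 2 * fderiv ℝ (fderiv ℝ j) (x + c • w) w w)) = 0 := by
    linear_combination -he
  rcases mul_eq_zero.1 this with h | h
  · exact absurd h hne
  · linarith

theorem aux_inner {Ω : Type*} [MeasurableSpace Ω] {μ : Measure Ω} (f g : Lp ℝ 2 μ) :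
    ∫ x, f x * g x ∂μ = inner ℝ f g := by
  rw [L2.inner_def]
  refine integral_congr_ae (Eventually.of_forall fun x => ?_)
  simp [mul_comm]

theorem aux_integrable {Ω : Type*} [MeasurableSpace Ω] {μ : Measure Ω} (f g : Lp ℝ 2 μ) :
    Integrable (fun x => f x * g x) μ := by
  refine (L2.integrable_inner (𝕜 := ℝ) f g).congr (Eventually.of_forall fun x => ?_)
  simp [mul_comm]

theorem aux_sign {Ω : Type*} [MeasurableSpace Ω] {μ : Measure Ω} [IsFiniteMeasure μ]
    (u : ℕ → Lp ℝ 2 μ) (h : Lp ℝ 2 μ)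
    (hw : ∀ g : Lp ℝ 2 μ, Tendsto (fun k => inner ℝ (u k) g) atTop (nhds (inner ℝ h g)))
    (A : Set Ω) (hA : MeasurableSet A) (hs : ∀ k, ∀ᵐ x ∂μ, x ∈ A → 0 ≤ u k x) :
    ∀ᵐ x ∂μ, x ∈ A → 0 ≤ h x := by
  have hi : Integrable h μ := (Lp.memLp h).integrable (by norm_num)
  have := ae_nonneg_restrict_of_forall_setIntegral_nonneg_inter (μ := μ) (f := h) (t := A)
    hi.integrableOn ?_
  · exact (ae_restrict_iff' hA).1 this
  · intro s hsm hfin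
    have hm := hsm.inter hA
    rw [← L2.inner_indicatorConstLp_one (𝕜 := ℝ) hm hfin.ne h, real_inner_comm]
    refine ge_of_tendsto' (hw _) fun k => ?_
    rw [real_inner_comm, L2.inner_indicatorConstLp_one (𝕜 := ℝ) hm hfin.ne]
    refine setIntegral_nonneg_of_ae_restrict ?_
    refine (ae_restrict_iff' hm).2 ?_
    filter_upwards [hs k] with x hx hxs using hx hxs.2

theorem aux_vi {Ω : Type*} [MeasurableSpace Ω] {μ : Measure Ω} [IsFiniteMeasure μ]
    (a b : ℝ) (hab : a < b) (qbar dbar : Lp ℝ 2 μ) (hq : ∀ᵐ x ∂μ, a ≤ qbar x ∧ qbar x ≤ b)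
    (hvi : ∀ q : Lp ℝ 2 μ, (∀ᵐ x ∂μ, a ≤ q x ∧ q x ≤ b) →
      0 ≤ ∫ x, dbar x * (q x - qbar x) ∂μ) :
    ∀ᵐ x ∂μ, (0 < dbar x → qbar x = a) ∧ (dbar x < 0 → qbar x = b) := by
  classical
  have hdm := (Lp.stronglyMeasurable dbar).measurable
  have hqm := (Lp.stronglyMeasurable qbar).measurable
  let r : Ω → ℝ := fun x => if 0 < dbar x then a else if dbar x < 0 then b else qbar x
  have hrm : Measurable r :=
    Measurable.ite (measurableSet_lt measurable_const hdm) measurable_const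
      (Measurable.ite (measurableSet_lt hdm measurable_const) measurable_const hqm)
  have hrb : ∀ᵐ x ∂μ, a ≤ r x ∧ r x ≤ b := by
    filter_upwards [hq] with x hx
    simp only [r]
    split_ifs
    · exact ⟨le_rfl, hab.le⟩
    · exact ⟨hab.le, le_rfl⟩
    · exact hx
  have hrL : MemLp r 2 μ := by
    refine MemLp.of_bound hrm.aestronglyMeasurable (max |a| |b|) ?_
    filter_upwards [hrb] with x hx
    rw [Real.norm_eq_abs]
    exact abs_le_max_abs_abs hx.1 hx.2
  let q : Lp ℝ 2 μ := hrL.toLp r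
  have hqr : ∀ᵐ x ∂μ, q x = r x := hrL.coeFn_toLp
  have h0 := hvi q (by filter_upwards [hqr, hrb] with x h1 h2; rwa [h1])
  have hint : Integrable (fun x => dbar x * (q x - qbar x)) μ := by
    refine (aux_integrable dbar (q - qbar)).congr ?_
    filter_upwards [Lp.coeFn_sub q qbar] with x hx
    rw [hx]; rfl
  have hle : 0 ≤ᵐ[μ] fun x => -(dbar x * (q x - qbar x)) := by
    filter_upwards [hqr, hq] with x h1 h2
    rw [h1]
    simp only [r, Pi.zero_apply]
    split_ifs with h3 h4
    · nlinarith
    · nlinarith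
    · simp
  have hz : ∫ x, -(dbar x * (q x - qbar x)) ∂μ = 0 := by
    refine le_antisymm ?_ (integral_nonneg_of_ae hle)
    rw [integral_neg]; linarith
  have := (integral_eq_zero_iff_of_nonneg_ae hle hint.neg).1 hz
  filter_upwards [this, hqr] with x h1 h2
  simp only [Pi.zero_apply, neg_eq_zero, mul_eq_zero, h2, r] at h1
  constructor
  · intro h
    rw [if_pos h] at h1
    rcases h1 with h1 | h1 <;> linarith
  · intro h
    rw [if_neg h.not_gt, if_pos h] at h1
    rcases h1 with h1 | h1 <;> linarith

/-- Second order sufficient optimality conditions (quadratic growth) on an `L²` box: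
if `j` is `C²`, `(q̄, d̄)` satisfies the first order conditions (representation of
`j'(q̄)` and the variational inequality), `j''` enjoys the weak sequential lower
semicontinuity-with-Legendre-term property with constant `α > 0`, and `j''(q̄)` is
positive definite on the critical cone `C_{q̄} \ {0}`, then `j` grows quadratically
around `q̄` on `Q_ad`. -/
theorem stmt_10 {Ω : Type*} [MeasurableSpace Ω] (μ : Measure Ω) [IsFiniteMeasure μ]
    (a b : ℝ) (hab : a < b)
    (j : Lp ℝ 2 μ → ℝ) (hj : ContDiff ℝ 2 j)
    (qbar : Lp ℝ 2 μ) (hqbar_ad : ∀ᵐ x ∂μ, a ≤ qbar x ∧ qbar x ≤ b)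
    (dbar : Lp ℝ 2 μ)
    (hrep : ∀ w : Lp ℝ 2 μ, fderiv ℝ j qbar w = ∫ x, dbar x * w x ∂μ)
    (hvi : ∀ q : Lp ℝ 2 μ, (∀ᵐ x ∂μ, a ≤ q x ∧ q x ≤ b) →
      0 ≤ ∫ x, dbar x * (q x - qbar x) ∂μ)
    (hlsc : ∃ α : ℝ, 0 < α ∧
      ∀ (qk : ℕ → Lp ℝ 2 μ) (hk : ℕ → Lp ℝ 2 μ) (h : Lp ℝ 2 μ),
        (∀ k, ∀ᵐ x ∂μ, a ≤ qk k x ∧ qk k x ≤ b) →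
        Tendsto qk atTop (nhds qbar) →
        (∀ k, ‖hk k‖ = 1) →
        (∀ g : Lp ℝ 2 μ, Tendsto (fun k => ∫ x, hk k x * g x ∂μ) atTop
          (nhds (∫ x, h x * g x ∂μ))) →
        fderiv ℝ (fderiv ℝ j) qbar h h + α * (1 - ‖h‖ ^ 2) ≤
          liminf (fun k => fderiv ℝ (fderiv ℝ j) (qk k) (hk k) (hk k)) atTop)
    (hpos : ∀ v : Lp ℝ 2 μ,
      (∀ᵐ x ∂μ, (dbar x ≠ 0 → v x = 0) ∧
        (qbar x = a → 0 ≤ v x) ∧ (qbar x = b → v x ≤ 0)) → v ≠ 0 →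
      0 < fderiv ℝ (fderiv ℝ j) qbar v v) :
    ∃ δ > (0 : ℝ), ∃ σ > (0 : ℝ), ∀ q : Lp ℝ 2 μ,
      (∀ᵐ x ∂μ, a ≤ q x ∧ q x ≤ b) → ‖q - qbar‖ ≤ σ →
      j qbar + δ / 2 * ‖q - qbar‖ ^ 2 ≤ j q := by
  by_contra hcon
  push Not at hcon
  have hseq : ∀ k : ℕ, ∃ q : Lp ℝ 2 μ, (∀ᵐ x ∂μ, a ≤ q x ∧ q x ≤ b) ∧
      ‖q - qbar‖ ≤ 1 / ((k : ℝ) + 1) ∧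
      j q < j qbar + (1 / ((k : ℝ) + 1)) / 2 * ‖q - qbar‖ ^ 2 := fun k =>
    hcon _ Nat.one_div_pos_of_nat _ Nat.one_div_pos_of_nat
  choose q hqad hqn hqj using hseq
  have hρ : ∀ k, 0 < ‖q k - qbar‖ := by
    intro k
    rcases (norm_nonneg (q k - qbar)).eq_or_lt with h | h
    · have h1 := hqj k
      rw [← h] at h1
      have h2 : q k = qbar := sub_eq_zero.1 (norm_eq_zero.1 h.symm)
      rw [h2] at h1
      simp at h1
    · exact h
  let u : ℕ → Lp ℝ 2 μ := fun k => ‖q k - qbar‖⁻¹ • (q k - qbar)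
  have hu1 : ∀ k, ‖u k‖ = 1 := by
    intro k
    simp only [u, norm_smul, norm_inv, norm_norm]
    exact inv_mul_cancel₀ (hρ k).ne'
  have hqu : ∀ k, q k - qbar = ‖q k - qbar‖ • u k := by
    intro k
    simp only [u]
    rw [smul_smul, mul_inv_cancel₀ (hρ k).ne', one_smul]
  choose t ht0 ht1 hT using fun k => aux_taylor j hj qbar (q k - qbar)
  let ξ : ℕ → Lp ℝ 2 μ := fun k => qbar + t k • (q k - qbar)
  have hξad : ∀ k, ∀ᵐ x ∂μ, a ≤ ξ k x ∧ ξ k x ≤ b := by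
    intro k
    filter_upwards [hqad k, hqbar_ad, Lp.coeFn_add qbar (t k • (q k - qbar)),
      Lp.coeFn_smul (t k) (q k - qbar), Lp.coeFn_sub (q k) qbar] with x h1 h2 h3 h4 h5
    have : ξ k x = qbar x + t k * (q k x - qbar x) := by
      simp only [ξ]
      rw [h3, Pi.add_apply, h4, Pi.smul_apply, h5, Pi.sub_apply, smul_eq_mul]
    rw [this]
    have := ht0 k
    have := ht1 k
    constructor <;> nlinarith
  have hξlim : Tendsto ξ atTop (nhds qbar) := by
    rw [tendsto_iff_norm_sub_tendsto_zero]
    refine squeeze_zero (fun _ => norm_nonneg _) (fun k => ?_)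
      tendsto_one_div_add_atTop_nhds_zero_nat
    have : ξ k - qbar = t k • (q k - qbar) := by simp [ξ]
    rw [this, norm_smul, Real.norm_of_nonneg (ht0 k).le]
    have := ht1 k
    have := hqn k
    have := hρ k
    nlinarith
  -- first order term is nonnegative
  have hfo : ∀ k, 0 ≤ fderiv ℝ j qbar (q k - qbar) := by
    intro k
    rw [hrep]
    refine (hvi (q k) (hqad k)).trans_eq (integral_congr_ae ?_)
    filter_upwards [Lp.coeFn_sub (q k) qbar] with x hx
    rw [hx]; rfl
  let J : ℕ → ℝ := fun k => fderiv ℝ (fderiv ℝ j) (ξ k) (u k) (u k)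
  have hmain : ∀ k, fderiv ℝ j qbar (q k - qbar) + 1 / 2 * (‖q k - qbar‖ ^ 2 * J k)
      < (1 / ((k : ℝ) + 1)) / 2 * ‖q k - qbar‖ ^ 2 := by
    intro k
    have h1 := hT k
    have h2 : fderiv ℝ (fderiv ℝ j) (qbar + t k • (q k - qbar)) (q k - qbar) (q k - qbar)
        = ‖q k - qbar‖ ^ 2 * J k := by
      change fderiv ℝ (fderiv ℝ j) (ξ k) (q k - qbar) (q k - qbar) = _
      change _ = ‖q k - qbar‖ ^ 2 * fderiv ℝ (fderiv ℝ j) (ξ k) (u k) (u k)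
      generalize fderiv ℝ (fderiv ℝ j) (ξ k) = B
      have h3 : B (q k - qbar) (q k - qbar)
          = B (‖q k - qbar‖ • u k) (‖q k - qbar‖ • u k) := by rw [← hqu k]
      rw [h3]
      simp only [map_smul, smul_apply, smul_eq_mul]
      ring
    rw [h2, add_sub_cancel] at h1
    linarith [hqj k]
  have hJ : ∀ k, J k ≤ 1 / ((k : ℝ) + 1) := by
    intro k
    by_contra hlt
    push Not at hlt
    have h1 := hmain k
    have h2 := hfo k
    have h3 : 0 < ‖q k - qbar‖ ^ 2 := pow_pos (hρ k) 2
    nlinarith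
  have hcont : Continuous (fderiv ℝ (fderiv ℝ j)) :=
    (hj.fderiv_right (m := 1) (by norm_num)).continuous_fderiv (by norm_num)
  obtain ⟨C, hC⟩ : ∃ C : ℝ, ∀ k, ‖fderiv ℝ (fderiv ℝ j) (ξ k)‖ ≤ C := by
    have hn : Continuous fun x => ‖fderiv ℝ (fderiv ℝ j) x‖ :=
      Continuous.norm (E := Lp ℝ 2 μ →L[ℝ] Lp ℝ 2 μ →L[ℝ] ℝ) hcont
    have h0 := (hn.tendsto qbar).comp hξlim
    have := h0.bddAbove_range
    obtain ⟨C, hC⟩ := this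
    exact ⟨C, fun k => hC ⟨k, rfl⟩⟩
  have hJabs : ∀ k, |J k| ≤ C := by
    intro k
    have := (fderiv ℝ (fderiv ℝ j) (ξ k)).le_opNorm₂ (u k) (u k)
    rw [hu1 k, mul_one, mul_one] at this
    exact this.trans (hC k)
  -- first order term along directions
  have hfo2 : ∀ k, fderiv ℝ j qbar (u k) ≤ (1 + C) * (1 / ((k : ℝ) + 1)) := by
    intro k
    have h1 := hmain k
    have h2 : fderiv ℝ j qbar (q k - qbar) = ‖q k - qbar‖ * fderiv ℝ j qbar (u k) := by
      conv_lhs => rw [hqu k]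
      simp
    rw [h2] at h1
    have h3 := hρ k
    have h4 := (abs_le.1 (hJabs k)).1
    have h5 := hqn k
    have hk0 : (0 : ℝ) < 1 / ((k : ℝ) + 1) := Nat.one_div_pos_of_nat
    have hk1 : 1 / ((k : ℝ) + 1) ≤ 1 := by
      rw [div_le_one (by positivity)]
      linarith [Nat.cast_nonneg (α := ℝ) k]
    have hC0 : 0 ≤ C := (abs_nonneg _).trans (hJabs k)
    generalize 1 / ((k : ℝ) + 1) = e at *
    generalize ‖q k - qbar‖ = ρ at *
    have h6 : ρ * fderiv ℝ j qbar (u k) < ρ * (ρ * (e / 2 - J k / 2)) := by nlinarith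
    have h7 := lt_of_mul_lt_mul_left h6 h3.le
    have h8 : e / 2 - J k / 2 ≤ 1 + C := by linarith
    have h9 : ρ * (e / 2 - J k / 2) ≤ ρ * (1 + C) := mul_le_mul_of_nonneg_left h8 h3.le
    nlinarith
  obtain ⟨h, hh1, φ, hφ, hw⟩ := aux_weak_compact u (fun k => (hu1 k).le)
  -- sign conditions
  have hux : ∀ k, ∀ᵐ x ∂μ, u k x = ‖q k - qbar‖⁻¹ * (q k x - qbar x) := by
    intro k
    filter_upwards [Lp.coeFn_smul (‖q k - qbar‖⁻¹) (q k - qbar), Lp.coeFn_sub (q k) qbar]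
      with x h4 h5
    simp only [u]
    rw [h4, Pi.smul_apply, h5, Pi.sub_apply, smul_eq_mul]
  have hqm := (Lp.stronglyMeasurable qbar).measurable
  have hsa : ∀ᵐ x ∂μ, qbar x = a → 0 ≤ h x := by
    refine aux_sign (fun k => u (φ k)) h hw {x | qbar x = a}
      (hqm (measurableSet_singleton a)) fun k => ?_
    filter_upwards [hux (φ k), hqad (φ k)] with x h1 h2 h3
    have h3 : qbar x = a := h3
    rw [h1, h3]
    exact mul_nonneg (inv_nonneg.2 (hρ _).le) (by linarith [h2.1])
  have hsb : ∀ᵐ x ∂μ, qbar x = b → h x ≤ 0 := by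
    have := aux_sign (fun k => - u (φ k)) (-h) (fun g => by simpa using (hw g).neg)
      {x | qbar x = b} (hqm (measurableSet_singleton b)) fun k => by
        filter_upwards [hux (φ k), hqad (φ k), Lp.coeFn_neg (u (φ k))] with x h1 h2 h4 h3
        have h3 : qbar x = b := h3
        rw [h4, Pi.neg_apply, h1, h3, ← mul_neg]
        exact mul_nonneg (inv_nonneg.2 (hρ _).le) (by linarith [h2.2])
    filter_upwards [this, Lp.coeFn_neg h] with x h1 h2 h3
    have := h1 h3
    rw [h2, Pi.neg_apply] at this
    linarith
  have hdv := aux_vi a b hab qbar dbar hqbar_ad hvi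
  have hdh : 0 ≤ᵐ[μ] fun x => dbar x * h x := by
    filter_upwards [hdv, hsa, hsb] with x h1 h2 h3
    simp only [Pi.zero_apply]
    rcases lt_trichotomy (dbar x) 0 with h4 | h4 | h4
    · exact mul_nonneg_of_nonpos_of_nonpos h4.le (h3 (h1.2 h4))
    · simp [h4]
    · exact mul_nonneg h4.le (h2 (h1.1 h4))
  have hdz : ∫ x, dbar x * h x ∂μ = 0 := by
    refine le_antisymm ?_ (integral_nonneg_of_ae hdh)
    have h1 := hw dbar
    have h2 : Tendsto (fun k => (1 + C) * (1 / ((φ k : ℝ) + 1))) atTop (nhds 0) := by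
      have := (tendsto_one_div_add_atTop_nhds_zero_nat (𝕜 := ℝ)).comp hφ.tendsto_atTop
      simpa using this.const_mul (1 + C)
    rw [aux_inner, real_inner_comm]
    refine le_of_tendsto_of_tendsto' h1 h2 fun k => ?_
    have := hfo2 (φ k)
    rwa [hrep, aux_inner, real_inner_comm] at this
  have hcrit : ∀ᵐ x ∂μ, (dbar x ≠ 0 → h x = 0) ∧
      (qbar x = a → 0 ≤ h x) ∧ (qbar x = b → h x ≤ 0) := by
    have := (integral_eq_zero_iff_of_nonneg_ae hdh (aux_integrable dbar h)).1 hdz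
    filter_upwards [this, hsa, hsb] with x h1 h2 h3
    refine ⟨fun h4 => ?_, h2, h3⟩
    exact (mul_eq_zero.1 h1).resolve_left h4
  obtain ⟨α, hα, hl⟩ := hlsc
  have hlim := hl (fun k => ξ (φ k)) (fun k => u (φ k)) h (fun k => hξad _)
    (hξlim.comp hφ.tendsto_atTop) (fun k => hu1 _) (fun g => by
      simp only [aux_inner]; exact hw g)
  have hle0 : liminf (fun k => J (φ k)) atTop ≤ 0 := by
    have h2 : Tendsto (fun k => (1 / ((φ k : ℝ) + 1))) atTop (nhds 0) :=
      (tendsto_one_div_add_atTop_nhds_zero_nat (𝕜 := ℝ)).comp hφ.tendsto_atTop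
    rw [← h2.liminf_eq]
    refine liminf_le_liminf (Eventually.of_forall fun k => hJ (φ k)) ?_ ?_
    · exact isBoundedUnder_of ⟨-C, fun k => (abs_le.1 (hJabs (φ k))).1⟩
    · exact h2.isBoundedUnder_le.isCoboundedUnder_ge
  have hfin := hlim.trans hle0
  by_cases hz : h = 0
  · rw [hz] at hfin
    simp at hfin
    linarith
  · have h1 := hpos h hcrit hz
    have h2 : ‖h‖ ^ 2 ≤ 1 := pow_le_one₀ (norm_nonneg _) hh1
    nlinarith
end
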